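/- Let n, d ≥ 1 be integers, let K ⊆ ℝⁿ be a convex body, let δ := ρ̄(ℤⁿ + K), and set C := (4^d · d^{d/2} + 1)^{d·2^d} + 1. Let Λ_d ⊆ ℝ^d be a lattice with det(Λ_d) = 1, generated by linearly independent vectors b₁, …, b_d, let B := [b₁, …, b_d] be the corresponding d×d matrix, and let P be a fundamental parallelepiped of Λ_d having the origin as a vertex, with vertex set V(P). For y = (y₁, …, y_d) ∈ ([0,1)ⁿ)^d define the linear map φ_y(z) := [y₁, …, y_d]·B⁻¹·z (so φ_y(Σⱼ μⱼbⱼ) = Σⱼ μⱼyⱼ for integers μⱼ), and set K_y^P := ⋃_{x ∈ V(P)} (K + φ_y(x)). Then the Lebesgue measure of the set of y ∈ ([0,1)ⁿ)^d such that ρ̄(ℤⁿ + K_y^P) ≤ (Cd)^{2^d − 1} · δ^{2^d} is at least 1 − 1/C. -/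

import Mathlib

open MeasureTheory Pointwise Matrix

noncomputable section

/-- The lattice generated by vectors `b`. -/
def latticeSet {n : ℕ} (b : Fin n → EuclideanSpace ℝ (Fin n)) :
    Set (EuclideanSpace ℝ (Fin n)) :=
  {x | ∃ c : Fin n → ℤ, x = ∑ i, (c i : ℝ) • b i}

/-- The determinant of the lattice generated by `b`. -/
def latticeDet {n : ℕ} (b : Fin n → EuclideanSpace ℝ (Fin n)) : ℝ :=
  |(Matrix.of fun i j => b j i).det|

/-- Vertex set of the parallelepiped starting at `x` generated by `v`. -/
def vertexSet {n : ℕ} (x : EuclideanSpace ℝ (Fin n))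
    (v : Fin n → EuclideanSpace ℝ (Fin n)) : Set (EuclideanSpace ℝ (Fin n)) :=
  {y | ∃ lam : Fin n → ℝ, (∀ i, lam i = 0 ∨ lam i = 1) ∧ y = x + ∑ i, lam i • v i}

/-- `P` is a fundamental parallelepiped of the lattice `Λ` with determinant `detΛ`. -/
def IsFundParallelepiped {n : ℕ} (Λ : Set (EuclideanSpace ℝ (Fin n))) (detΛ : ℝ)
    (P : Set (EuclideanSpace ℝ (Fin n))) : Prop :=
  ∃ x v, LinearIndependent ℝ v ∧ P = convexHull ℝ (vertexSet x v) ∧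
    vertexSet x v ⊆ Λ ∧ volume P = ENNReal.ofReal detΛ

/-- `(Λ(b), B_r)` is a lattice covering of `ℝⁿ`. -/
def IsLatticeCovering {n : ℕ} (b : Fin n → EuclideanSpace ℝ (Fin n)) (r : ℝ) : Prop :=
  LinearIndependent ℝ b ∧ latticeSet b + Metric.closedBall 0 r = Set.univ

/-- `(Λ(b), B_r)` is a robust lattice covering of `ℝⁿ`. -/
def IsRobustCovering {n : ℕ} (b : Fin n → EuclideanSpace ℝ (Fin n)) (r : ℝ) : Prop :=
  IsLatticeCovering b r ∧
  ∀ c : EuclideanSpace ℝ (Fin n),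
    ∃ P, IsFundParallelepiped (latticeSet b) (latticeDet b) P ∧
      P ⊆ Metric.closedBall c r

/-- The density of the lattice covering `(Λ(b), B_r)`. -/
def coveringDensity {n : ℕ} (b : Fin n → EuclideanSpace ℝ (Fin n)) (r : ℝ) : ℝ :=
  (volume (Metric.closedBall (0 : EuclideanSpace ℝ (Fin n)) r)).toReal / latticeDet b

/-- `ν_d`, the volume of the ball of radius `√d` in `ℝ^d`. -/
def nu (d : ℕ) : ℝ :=
  (volume (Metric.closedBall (0 : EuclideanSpace ℝ (Fin d)) (Real.sqrt d))).toReal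

/-- The integer lattice `ℤⁿ ⊆ ℝⁿ`. -/
def intLat (n : ℕ) : Set (EuclideanSpace ℝ (Fin n)) :=
  {x | ∀ i, ∃ m : ℤ, x i = (m : ℝ)}

/-- The fundamental cube `[0,1)ⁿ ⊆ ℝⁿ`. -/
def unitCube (n : ℕ) : Set (EuclideanSpace ℝ (Fin n)) :=
  {x | ∀ i, x i ∈ Set.Ico (0 : ℝ) 1}

/-- The uncovered density `ρ̄(ℤⁿ + A) = vol([0,1)ⁿ \ (ℤⁿ + A))`. -/
def rhoBar {n : ℕ} (A : Set (EuclideanSpace ℝ (Fin n))) : ℝ :=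
  (volume (unitCube n \ (intLat n + A))).toReal

set_option linter.unusedSectionVars false
instance sc1 : SecondCountableTopology UnitAddCircle := by
  unfold UnitAddCircle AddCircle; infer_instance
instance sc2 (n:ℕ): BorelSpace (Fin n → UnitAddCircle) := inferInstance
instance sc0 : IsProbabilityMeasure (volume : Measure UnitAddCircle) := ⟨by simp⟩
instance sc3 (n:ℕ): IsProbabilityMeasure (volume : Measure (Fin n → UnitAddCircle)) := by rw [volume_pi]; infer_instance

section
variable {G : Type} [AddCommGroup G] [MeasurableSpace G] [MeasurableAdd₂ G] [MeasurableSub₂ G] [MeasurableNeg G]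

def capSet {d : ℕ} (U : Set G) (u : Fin d → G) : Set G :=
  {x | ∀ lam : Fin d → Bool, x - (∑ i, if lam i then u i else 0) ∈ U}

lemma capSet_cons {d : ℕ} (U : Set G) (u : Fin (d+1) → G) :
    capSet U u = capSet {x | x ∈ U ∧ x - u 0 ∈ U} (fun i => u i.succ) := by
  ext x
  simp only [capSet, Set.mem_ofPred_eq]
  constructor
  · intro h lam
    refine ⟨by simpa [Fin.sum_univ_succ] using h (Fin.cons false lam), ?_⟩
    have := h (Fin.cons true lam)
    simp only [Fin.sum_univ_succ, Fin.cons_zero, Fin.cons_succ, if_true] at this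
    rwa [sub_sub, add_comm]
  · intro h lam
    have := h (fun i => lam i.succ)
    rw [Fin.sum_univ_succ]
    cases h0 : lam 0
    · simpa using this.1
    · have := this.2
      rw [sub_sub, add_comm] at this
      simpa using this

lemma meas_capSet {α : Type*} [MeasurableSpace α] {d : ℕ} {U : α → Set G} 
    (hU : MeasurableSet {p : α × G | p.2 ∈ U p.1}) {u : α → Fin d → G} (hu : Measurable u) :
    MeasurableSet {p : α × G | p.2 ∈ capSet (U p.1) (u p.1)} := by
  have : {p : α × G | p.2 ∈ capSet (U p.1) (u p.1)} = ⋂ lam : Fin d → Bool, 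
    (fun p : α × G => (p.1, p.2 - (∑ i, if lam i then u p.1 i else 0))) ⁻¹' {p : α × G | p.2 ∈ U p.1} := by
    ext p; simp [capSet]
  rw [this]
  refine MeasurableSet.iInter fun lam => ?_
  refine (Measurable.prodMk measurable_fst (measurable_snd.sub ?_)) hU
  refine Finset.measurable_sum _ fun i _ => ?_
  split_ifs
  · exact (measurable_pi_apply i).comp (hu.comp measurable_fst)
  · exact measurable_const

lemma meas_sect {α : Type*} [MeasurableSpace α] (μ : Measure G) [SFinite μ] {U : α → Set G} 
    (hU : MeasurableSet {p : α × G | p.2 ∈ U p.1}) : Measurable fun a => μ (U a) :=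
  measurable_measure_prodMk_left hU

lemma lint_sq (μ : Measure G) [IsProbabilityMeasure μ] [μ.IsAddLeftInvariant] [μ.IsNegInvariant]
    {U : Set G} (hU : MeasurableSet U) : ∫⁻ t, μ {x | x ∈ U ∧ x - t ∈ U} ∂μ = μ U ^ 2 := by
  have hS : MeasurableSet {p : G × G | p.2 ∈ U ∧ p.2 - p.1 ∈ U} :=
    (measurable_snd hU).inter ((measurable_snd.sub measurable_fst) hU)
  have h1 := Measure.prod_apply (μ := μ) (ν := μ) hS
  have h2 := Measure.prod_apply_symm (μ := μ) (ν := μ) hS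
  calc ∫⁻ t, μ {x | x ∈ U ∧ x - t ∈ U} ∂μ = (μ.prod μ) {p : G × G | p.2 ∈ U ∧ p.2 - p.1 ∈ U} := h1.symm
    _ = ∫⁻ x, μ ((fun t => (t, x)) ⁻¹' {p : G × G | p.2 ∈ U ∧ p.2 - p.1 ∈ U}) ∂μ := h2
    _ = ∫⁻ x, U.indicator (fun _ => μ U) x ∂μ := by
      refine lintegral_congr fun x => ?_
      by_cases hx : x ∈ U
      · simp only [Set.preimage_ofPred_eq, hx, true_and, Set.indicator_of_mem]
        exact (Measure.measurePreserving_sub_left μ x).measure_preimage hU.nullMeasurableSet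
      · simp [hx]
    _ = μ U ^ 2 := by
      rw [lintegral_indicator hU, lintegral_const, sq]; simp

lemma torus_bad (μ : Measure G) [IsProbabilityMeasure μ] [μ.IsAddLeftInvariant] [μ.IsNegInvariant]
    (L : ENNReal) (hL : L ≠ 0) (hL' : L ≠ ⊤) (d : ℕ) : ∀ U : Set G, MeasurableSet U →
    Measure.pi (fun _ : Fin d => μ) {u | L ^ (2 ^ d - 1) * μ U ^ 2 ^ d < μ (capSet U u)} ≤ d / L := by
  induction d with
  | zero => 
    intro U hU
    have : ∀ u : Fin 0 → G, capSet U u = U := by intro u; ext x; simp [capSet]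
    simp [this]
  | succ d ih =>
    intro U hU
    set V : G → Set G := fun t => {x | x ∈ U ∧ x - t ∈ U} with hV
    have hVm : MeasurableSet {p : G × G | p.2 ∈ V p.1} :=
      (measurable_snd hU).inter ((measurable_snd.sub measurable_fst) hU)
    have hVt : ∀ t, MeasurableSet (V t) := fun t => hU.inter ((measurable_id.sub_const t) hU)
    have hVμ := meas_sect μ hVm
    set A : Set (G × (Fin d → G)) := {p | L * μ U ^ 2 < μ (V p.1)} with hA
    set B : Set (G × (Fin d → G)) := 
      {p | L ^ (2 ^ d - 1) * μ (V p.1) ^ 2 ^ d < μ (capSet (V p.1) p.2)} with hB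
    have hBm : MeasurableSet B := by
      refine measurableSet_lt ((hVμ.comp measurable_fst).pow_const _ |>.const_mul _) ?_
      refine meas_sect μ (U := fun p : G × (Fin d → G) => capSet (V p.1) p.2) ?_
      refine meas_capSet (U := fun p : G × (Fin d → G) => V p.1) (u := Prod.snd) ?_ measurable_snd
      exact (Measurable.prodMk (measurable_fst.comp measurable_fst) measurable_snd) hVm
    have hAb : μ {t | L * μ U ^ 2 < μ (V t)} ≤ 1 / L := by
      by_cases h0 : μ U = 0
      · have : ∀ t, μ (V t) = 0 := fun t => measure_mono_null (fun x hx => hx.1) h0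
        simp [this]
      · have hm := meas_ge_le_lintegral_div (μ := μ) hVμ.aemeasurable (ε := L * μ U ^ 2) 
          (by simp [hL, h0]) (ENNReal.mul_ne_top hL' (by simp))
        rw [lint_sq μ hU] at hm
        refine (measure_mono (t := {x | L * μ U ^ 2 ≤ μ (V x)}) 
          fun t ht => le_of_lt (Set.mem_ofPred_eq ▸ ht)).trans
          (hm.trans ?_)
        rw [ENNReal.div_le_iff (by simp [hL, h0]) (ENNReal.mul_ne_top hL' (by simp)), ← mul_assoc,
          ENNReal.div_mul_cancel hL hL', one_mul]
    have hBb : (μ.prod (Measure.pi fun _ : Fin d => μ)) B ≤ d / L := by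
      rw [Measure.prod_apply hBm]
      refine (lintegral_mono fun t => ih (V t) (hVt t)).trans ?_
      simp
    have hAp : (μ.prod (Measure.pi fun _ : Fin d => μ)) A ≤ 1 / L := by
      have : A = {t | L * μ U ^ 2 < μ (V t)} ×ˢ Set.univ := by ext; simp [hA]
      rw [this, Measure.prod_prod]; simpa using hAb
    have mp := measurePreserving_piFinSuccAbove (fun _ : Fin (d+1) => μ) 0
    refine (measure_mono (t := MeasurableEquiv.piFinSuccAbove (fun _ => G) 0 ⁻¹' (A ∪ B)) ?_).trans ?_
    · intro u hu
      by_contra hcon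
      simp only [Set.mem_preimage, Set.mem_union, not_or, hA, hB, Set.mem_ofPred_eq, not_lt] at hcon
      obtain ⟨h1, h2⟩ := hcon
      simp only [Set.mem_ofPred_eq, capSet_cons U u] at hu
      refine absurd hu (not_lt.2 ?_)
      refine h2.trans ?_
      calc _ ≤ L ^ (2 ^ d - 1) * (L * μ U ^ 2) ^ 2 ^ d := by gcongr
        _ = L ^ (2 ^ (d+1) - 1) * μ U ^ 2 ^ (d+1) := by
          have : 2 ^ (d+1) - 1 = (2^d - 1) + 2^d := by have := Nat.one_le_two_pow (n := d); omega
          rw [mul_pow, ← pow_mul, this, pow_add, pow_succ' 2 d, mul_assoc]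
    · have hAm : MeasurableSet A := measurableSet_lt measurable_const (hVμ.comp measurable_fst)
      rw [mp.measure_preimage (hAm.union hBm).nullMeasurableSet]
      refine (measure_union_le _ _).trans ((add_le_add hAp hBb).trans ?_)
      rw [← ENNReal.add_div]; push_cast; rw [add_comm]
end

instance sc4 (n d : ℕ) : (volume : Measure (Fin d → Fin n → UnitAddCircle)).IsAddHaarMeasure := by
  have h1 : (volume : Measure (Fin n → UnitAddCircle)).IsAddHaarMeasure := inferInstance
  have h2 : MeasurableAdd (Fin n → UnitAddCircle) := inferInstance
  exact @Measure.pi.isAddHaarMeasure (Fin d) (fun _ => Fin n → UnitAddCircle) _ _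
    (fun _ => volume) _ _ _ (fun _ => h1) (fun _ => h2)

def pr (n : ℕ) : EuclideanSpace ℝ (Fin n) →+ (Fin n → UnitAddCircle) where
  toFun x i := (x i : UnitAddCircle)
  map_zero' := by ext i; simp
  map_add' x y := by ext i; simp

lemma pr_apply (n : ℕ) (x : EuclideanSpace ℝ (Fin n)) (i : Fin n) :
    pr n x i = (x i : UnitAddCircle) := rfl

lemma pr_cont (n : ℕ) : Continuous (pr n) := by
  refine continuous_pi fun i => ?_
  exact (AddCircle.continuous_mk' 1).comp (by fun_prop)

lemma pr_surj (n : ℕ) : Function.Surjective (pr n) := by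
  intro t
  choose r hr using fun i => QuotientAddGroup.mk_surjective (t i)
  exact ⟨WithLp.toLp 2 r, funext hr⟩

lemma pr_mp (n : ℕ) : MeasurePreserving (pr n) (volume.restrict (unitCube n)) volume := by
  have h0 : MeasurePreserving (QuotientAddGroup.mk : ℝ → UnitAddCircle)
      (volume.restrict (Set.Ico (0:ℝ) 1)) volume := by
    have := UnitAddCircle.measurePreserving_mk 0
    rw [zero_add, ← Measure.restrict_congr_set (Ico_ae_eq_Ioc)] at this
    exact this
  have h1 := measurePreserving_pi (fun _ : Fin n => volume.restrict (Set.Ico (0:ℝ) 1))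
    (fun _ => volume) (fun _ => h0)
  rw [← Measure.restrict_pi_pi] at h1
  have h2 := (PiLp.volume_preserving_ofLp (Fin n)).restrict_preimage 
    (s := Set.univ.pi fun _ => Set.Ico (0:ℝ) 1) (MeasurableSet.univ_pi fun _ => measurableSet_Ico)
  have h3 : unitCube n = WithLp.ofLp ⁻¹' (Set.univ.pi fun _ => Set.Ico (0:ℝ) 1) := by
    ext x; simp [unitCube]
  rw [h3]
  exact h1.comp h2

lemma meas_cube (n : ℕ) : MeasurableSet (unitCube n) := by
  have h3 : unitCube n = WithLp.ofLp ⁻¹' (Set.univ.pi fun _ => Set.Ico (0:ℝ) 1) := by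
    ext x; simp [unitCube]
  rw [h3]
  exact (PiLp.volume_preserving_ofLp (Fin n)).measurable 
    (MeasurableSet.univ_pi fun _ => measurableSet_Ico)

lemma mem_intLat_add (n : ℕ) (A : Set (EuclideanSpace ℝ (Fin n))) (x : EuclideanSpace ℝ (Fin n)) :
    x ∈ intLat n + A ↔ pr n x ∈ pr n '' A := by
  have hz : ∀ z, z ∈ intLat n ↔ pr n z = 0 := by
    intro z
    rw [funext_iff]
    refine forall_congr' fun i => ?_
    rw [pr_apply, Pi.zero_apply, AddCircle.coe_eq_zero_iff]
    simp [eq_comm]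
  constructor
  · rintro ⟨z, hz', a, ha, rfl⟩
    refine ⟨a, ha, ?_⟩
    simp [(hz z).1 hz']
  · rintro ⟨a, ha, h⟩
    refine ⟨x - a, (hz _).2 (by simp [h]), a, ha, by simp⟩

lemma rhoBar_eq {n : ℕ} (A : Set (EuclideanSpace ℝ (Fin n))) (hA : MeasurableSet (pr n '' A)) :
    rhoBar A = (volume (pr n '' A)ᶜ).toReal := by
  have : unitCube n \ (intLat n + A) = (pr n ⁻¹' (pr n '' A)ᶜ) ∩ unitCube n := by
    ext x
    simp only [Set.mem_sdiff, mem_intLat_add, Set.mem_inter_iff, Set.mem_preimage,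
      Set.mem_compl_iff]
    tauto
  rw [rhoBar, this, ← Measure.restrict_apply' (meas_cube n),
    (pr_mp n).measure_preimage hA.compl.nullMeasurableSet]

def tmap (n d : ℕ) (m : Fin d → Fin d → ℤ) :
    (Fin d → Fin n → UnitAddCircle) →+ (Fin d → Fin n → UnitAddCircle) where
  toFun u i := ∑ j, m i j • u j
  map_zero' := by ext i; simp
  map_add' x y := by ext i k; simp [Finset.sum_add_distrib]

lemma pr_int {n : ℕ} (z : ℤ) (x : EuclideanSpace ℝ (Fin n)) : pr n ((z : ℝ) • x) = z • pr n x := by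
  rw [← map_zsmul, Int.cast_smul_eq_zsmul]

lemma tmap_pr (n d : ℕ) (m : Fin d → Fin d → ℤ) (y : Fin d → EuclideanSpace ℝ (Fin n)) (i : Fin d) :
    tmap n d m (fun j => pr n (y j)) i = pr n (∑ j, (m i j : ℝ) • y j) := by
  simp [tmap, pr_int]

lemma tmap_mp (n d : ℕ) (m : Fin d → Fin d → ℤ) 
    (hm : IsUnit (Matrix.of fun i j => (m i j : ℝ)).det) :
    MeasurePreserving (tmap n d m) volume volume := by
  refine AddMonoidHom.measurePreserving ?_ ?_ rfl
  · refine continuous_pi fun i => ?_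
    show Continuous fun u : Fin d → Fin n → UnitAddCircle => ∑ j, m i j • u j
    refine continuous_finsetSum _ fun j _ => ?_
    exact continuous_const_smul (m i j) |>.comp (continuous_apply j)
  · intro t
    choose r hr using fun i => pr_surj n (t i)
    set M := (Matrix.of fun i j => (m i j : ℝ)) with hM
    refine ⟨fun j => pr n (∑ k, M⁻¹ j k • r k), ?_⟩
    ext1 i
    rw [tmap_pr, ← hr i]
    congr 1
    have h1 := Matrix.mul_nonsing_inv M hm
    simp_rw [Finset.smul_sum, smul_smul]
    rw [Finset.sum_comm]
    simp_rw [← Finset.sum_smul]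
    have h2 : ∀ k, ∑ j, (m i j : ℝ) * M⁻¹ j k = (1 : Matrix (Fin d) (Fin d) ℝ) i k := by
      intro k; rw [← h1, Matrix.mul_apply]; rfl
    simp_rw [h2, Matrix.one_apply, ite_smul, one_smul, zero_smul]
    simp

set_option maxHeartbeats 2000000 in
/-- **Claim 3.6.** Let `K ⊆ ℝⁿ` be a convex body with `δ = ρ̄(ℤⁿ + K)`, let
`C = (4^d d^{d/2} + 1)^{d·2^d} + 1`, let `Λ_d ⊆ ℝ^d` be a lattice of determinant `1`
generated by `b₁, …, b_d` with matrix `B = [b₁,…,b_d]`, and let `P` be a fundamental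
parallelepiped of `Λ_d` with the origin as a vertex.  For `y = (y₁,…,y_d) ∈ ([0,1)ⁿ)^d`
let `φ_y(z) = [y₁,…,y_d] B⁻¹ z` and `K_y^P = ⋃_{w ∈ V(P)} (K + φ_y(w))`.  Then with
probability at least `1 − 1/C` over uniform `y`, one has
`ρ̄(ℤⁿ + K_y^P) ≤ (Cd)^{2^d−1} δ^{2^d}`. -/
theorem random_translates_good_probability_parallelepiped (n d : ℕ) (hn : 1 ≤ n) (hd : 1 ≤ d)
    (K : Set (EuclideanSpace ℝ (Fin n)))
    (hKcpt : IsCompact K) (hKconv : Convex ℝ K) (hKint : (interior K).Nonempty)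
    (δ C : ℝ) (hδ : δ = rhoBar K)
    (hC : C = (4 ^ d * (d : ℝ) ^ ((d : ℝ) / 2) + 1) ^ (d * 2 ^ d) + 1)
    (b : Fin d → EuclideanSpace ℝ (Fin d)) (hb : LinearIndependent ℝ b)
    (hdet : latticeDet b = 1)
    (v : Fin d → EuclideanSpace ℝ (Fin d)) (hv : LinearIndependent ℝ v)
    (hvert : vertexSet 0 v ⊆ latticeSet b)
    (hvolP : volume (convexHull ℝ (vertexSet 0 v)) = ENNReal.ofReal (latticeDet b)) :
    ENNReal.ofReal (1 - 1 / C) ≤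
      volume {y : Fin d → EuclideanSpace ℝ (Fin n) |
        (∀ i, y i ∈ unitCube n) ∧
        rhoBar (⋃ w ∈ vertexSet 0 v,
            (K + {∑ j, ((Matrix.of fun i j' => b j' i)⁻¹ *ᵥ (fun i => w i)) j • y j})) ≤
          (C * d) ^ (2 ^ d - 1) * δ ^ 2 ^ d} := by
  classical
  set B := (Matrix.of fun i j' => b j' i) with hB
  have hBu : IsUnit B.det := by
    rw [isUnit_iff_ne_zero]
    intro h
    simp [latticeDet, ← hB, h] at hdet
  have hvi : ∀ i, ∃ c : Fin d → ℤ, v i = ∑ j, (c j : ℝ) • b j := by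
    intro i
    refine hvert ⟨fun k => if k = i then 1 else 0, fun k => ?_, by simp⟩
    by_cases h : k = i <;> simp [h]
  choose m hm using hvi
  have hM : IsUnit (Matrix.of fun i j => (m i j : ℝ)).det := by
    rw [← Matrix.isUnit_iff_isUnit_det, ← Matrix.linearIndependent_rows_iff_isUnit,
      Fintype.linearIndependent_iff]
    intro g hg
    refine Fintype.linearIndependent_iff.1 hv g ?_
    simp_rw [hm, Finset.smul_sum, smul_smul]
    rw [Finset.sum_comm]
    simp_rw [← Finset.sum_smul]
    refine Finset.sum_eq_zero fun j _ => ?_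
    have := congrFun hg j
    simp only [Matrix.row, Finset.sum_apply, Pi.smul_apply, Matrix.of_apply, smul_eq_mul, Pi.zero_apply] at this
    rw [this, zero_smul]
  have hcoord : ∀ lam : Fin d → ℝ, 
      B⁻¹ *ᵥ (fun i => ((0 : EuclideanSpace ℝ (Fin d)) + ∑ i, lam i • v i) i) = 
        fun j => ∑ i, lam i * m i j := by
    intro lam
    have : (fun i => ((0 : EuclideanSpace ℝ (Fin d)) + ∑ i, lam i • v i) i) = 
        B *ᵥ (fun j => ∑ i, lam i * m i j) := by
      ext k
      simp only [hm, Matrix.mulVec, dotProduct, hB, Matrix.of_apply, zero_add, Finset.mul_sum,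
        WithLp.ofLp_sum, Finset.sum_apply, WithLp.ofLp_smul, Pi.smul_apply, smul_eq_mul]
      rw [Finset.sum_comm]
      refine Finset.sum_congr rfl fun j _ => Finset.sum_congr rfl fun i _ => by ring
    rw [this, Matrix.mulVec_mulVec, Matrix.nonsing_inv_mul _ hBu, Matrix.one_mulVec]
  set U : Set (Fin n → UnitAddCircle) := (pr n '' K)ᶜ with hU
  have hKc : IsClosed (pr n '' K) := (hKcpt.image (pr_cont n)).isClosed
  have hUm : MeasurableSet U := hKc.measurableSet.compl
  have htr : ∀ (y : Fin d → EuclideanSpace ℝ (Fin n)) (lam : Fin d → Bool),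
      pr n (∑ j, (∑ i, (if lam i then (1:ℝ) else 0) * m i j) • y j) = 
        ∑ i, if lam i then tmap n d m (fun j => pr n (y j)) i else 0 := by
    intro y lam
    simp_rw [Finset.sum_smul]
    rw [Finset.sum_comm, map_sum]
    refine Finset.sum_congr rfl fun i _ => ?_
    rw [tmap_pr]
    split_ifs <;> simp
  have hcap : ∀ y : Fin d → EuclideanSpace ℝ (Fin n), 
      (pr n '' (⋃ w ∈ vertexSet 0 v, (K + {∑ j, (B⁻¹ *ᵥ (fun i => w i)) j • y j})))ᶜ = 
        capSet U (tmap n d m (fun j => pr n (y j))) := by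
    intro y
    ext x
    rw [Set.mem_compl_iff, ← not_iff_not, not_not]
    simp only [capSet, Set.mem_ofPred_eq, not_forall, hU, Set.mem_compl_iff, not_not]
    constructor
    · rintro ⟨z, hz, rfl⟩
      simp only [Set.mem_iUnion] at hz
      obtain ⟨w, ⟨lam, hlam, rfl⟩, k, hk, t, ht, rfl⟩ := hz
      obtain ⟨lb, rfl⟩ : ∃ lb : Fin d → Bool, lam = fun i => if lb i then (1:ℝ) else 0 := by
        refine ⟨fun i => decide (lam i = 1), ?_⟩
        ext i
        rcases hlam i with h | h <;> simp [h]
      rw [Set.mem_singleton_iff, hcoord] at ht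
      refine ⟨lb, k, hk, ?_⟩
      rw [← htr, eq_sub_iff_add_eq, ← map_add, ht]
    · rintro ⟨lam, k, hk, h⟩
      rw [← htr, eq_sub_iff_add_eq, ← map_add] at h
      refine ⟨_, ?_, h⟩
      simp only [Set.mem_iUnion]
      refine ⟨_, ⟨fun i => if lam i then 1 else 0, fun i => ?_, rfl⟩, ?_⟩
      · cases lam i <;> simp
      · refine ⟨k, hk, _, ?_, rfl⟩
        rw [Set.mem_singleton_iff, hcoord]
  have hC1 : 1 ≤ C := by
    rw [hC]
    have : (0:ℝ) ≤ (4 ^ d * (d : ℝ) ^ ((d : ℝ) / 2) + 1) ^ (d * 2 ^ d) := by positivity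
    linarith
  have hd1 : (1:ℝ) ≤ d := by exact_mod_cast hd
  have hCd : 0 < C * d := by positivity
  set L := ENNReal.ofReal (C * d) with hL
  have hL0 : L ≠ 0 := by simp [hL, hCd]
  have hbad := torus_bad (volume : Measure (Fin n → UnitAddCircle)) L hL0 ENNReal.ofReal_ne_top d U hUm
  set bad := {u : Fin d → Fin n → UnitAddCircle | L ^ (2 ^ d - 1) * volume U ^ 2 ^ d < volume (capSet U u)}
    with hbaddef
  have hcm : MeasurableSet {p : (Fin d → Fin n → UnitAddCircle) × (Fin n → UnitAddCircle) | 
      p.2 ∈ capSet U p.1} :=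
    meas_capSet (U := fun _ : Fin d → Fin n → UnitAddCircle => U) (measurable_snd hUm) measurable_id
  have hbadm : MeasurableSet bad := 
    measurableSet_lt measurable_const (meas_sect volume hcm)
  have hmp : MeasurePreserving (fun y : Fin d → EuclideanSpace ℝ (Fin n) => 
      tmap n d m (fun j => pr n (y j))) (volume.restrict (Set.univ.pi fun _ => unitCube n)) volume := by
    have h1 := measurePreserving_pi (fun _ : Fin d => volume.restrict (unitCube n))
      (fun _ => volume) (fun _ => pr_mp n)
    rw [← Measure.restrict_pi_pi] at h1
    exact (tmap_mp n d m hM).comp h1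
  have hsub : (fun y : Fin d → EuclideanSpace ℝ (Fin n) => tmap n d m (fun j => pr n (y j))) ⁻¹' badᶜ ∩ 
      (Set.univ.pi fun _ => unitCube n) ⊆ {y : Fin d → EuclideanSpace ℝ (Fin n) |
        (∀ i, y i ∈ unitCube n) ∧
        rhoBar (⋃ w ∈ vertexSet 0 v,
            (K + {∑ j, (B⁻¹ *ᵥ (fun i => w i)) j • y j})) ≤
          (C * d) ^ (2 ^ d - 1) * δ ^ 2 ^ d} := by
    rintro y ⟨hy, hyc⟩
    refine ⟨fun i => hyc i trivial, ?_⟩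
    have hms : MeasurableSet (capSet U (tmap n d m (fun j => pr n (y j)))) :=
      measurable_prodMk_left hcm
    rw [rhoBar_eq _ (by rw [← MeasurableSet.compl_iff, hcap]; exact hms), hcap, hδ, 
      rhoBar_eq K hKc.measurableSet, ← hU]
    have hy' : volume (capSet U (tmap n d m (fun j => pr n (y j)))) ≤ L ^ (2 ^ d - 1) * volume U ^ 2 ^ d :=
      not_lt.1 hy
    refine (ENNReal.toReal_mono ?_ hy').trans_eq ?_
    · exact ENNReal.mul_ne_top (ENNReal.pow_ne_top ENNReal.ofReal_ne_top) 
        (ENNReal.pow_ne_top (measure_ne_top _ _))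
    · rw [ENNReal.toReal_mul, ENNReal.toReal_pow, ENNReal.toReal_pow, hL, ENNReal.toReal_ofReal hCd.le]
  refine le_trans ?_ (measure_mono hsub)
  rw [← Measure.restrict_apply' (MeasurableSet.univ_pi fun _ => meas_cube n),
    hmp.measure_preimage hbadm.compl.nullMeasurableSet]
  have hprob : IsProbabilityMeasure (volume : Measure (Fin d → Fin n → UnitAddCircle)) := by
    rw [volume_pi]; infer_instance
  rw [prob_compl_eq_one_sub hbadm, ENNReal.ofReal_sub _ (by positivity), ENNReal.ofReal_one]
  refine tsub_le_tsub_left (hbad.trans_eq ?_) _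
  rw [hL, ← ENNReal.ofReal_natCast, ← ENNReal.ofReal_div_of_pos hCd]
  congr 1
  field_simp

end
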